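/- Let F : ℝ^d → ℝ be continuous, ρ-weakly convex with ρ > 0, and bounded below, let ν ∈ (0, 1/ρ), and let Φ = F_ν be the Moreau envelope of F with parameter ν (so Φ is differentiable with L := (2 − νρ)/(ν − ν²ρ)-Lipschitz gradient and ∇Φ(w) = (w − prox_{νF}(w))/ν). Let ε > 0, 0 < β ≤ 1/2, 0 < α ≤ β/(2L), and T ≥ 1. Let w_0 ∈ ℝ^d, v_0 = 0, and for t = 0,…,T−1 let ẑ_t ∈ ℝ^d satisfy ‖ẑ_t − prox_{νF}(w_t)‖² ≤ ν²·ε²/18, and define v_{t+1} = (1−β)·v_t + (β/ν)·(w_t − ẑ_t) and w_{t+1} = w_t − α·v_{t+1}. Then (1/T)·∑_{t=0}^{T−1} ‖∇Φ(w_t)‖² ≤ 2·(Φ(w_0) − inf Φ)/(α·T) + (2/β − 1)·‖∇Φ(w_0)‖²/T + ε²/3. -/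

import Mathlib

open scoped RealInnerProductSpace BigOperators

section Prox

variable {E : Type*} [NormedAddCommGroup E] [InnerProductSpace ℝ E]

/-- The squared norm of a convex combination of two vectors. -/
lemma norm_sq_convex_combination (x y : E) (t : ℝ) :
    ‖(1 - t) • x + t • y‖ ^ 2 =
      (1 - t) * ‖x‖ ^ 2 + t * ‖y‖ ^ 2 - t * (1 - t) * ‖x - y‖ ^ 2 := by
  rw [norm_add_sq_real, norm_sub_sq_real, norm_smul, norm_smul, inner_smul_left,
    inner_smul_right, mul_pow, mul_pow, Real.norm_eq_abs, Real.norm_eq_abs, sq_abs, sq_abs]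
  simp only [conj_trivial]
  ring

lemma norm_add_sq_le_two_mul (x y : E) : ‖x + y‖ ^ 2 ≤ 2 * ‖x‖ ^ 2 + 2 * ‖y‖ ^ 2 := by
  have h := parallelogram_law_with_norm ℝ x y
  nlinarith [sq_nonneg ‖x - y‖]

/-- Quadratic growth of the proximal objective of a weakly convex function around its minimizer. -/
lemma prox_quadratic_growth {F : E → ℝ} {ρ ν : ℝ}
    (hF : ConvexOn ℝ Set.univ (fun x => F x + ρ / 2 * ‖x‖ ^ 2)) (hν : 0 < ν) {u q : E}
    (hq : ∀ v, F q + ‖u - q‖ ^ 2 / (2 * ν) ≤ F v + ‖u - v‖ ^ 2 / (2 * ν)) (v : E) :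
    F q + ‖u - q‖ ^ 2 / (2 * ν) + (1 / ν - ρ) / 2 * ‖q - v‖ ^ 2 ≤
      F v + ‖u - v‖ ^ 2 / (2 * ν) := by
  have key : ∀ t ∈ Set.Ioo (0 : ℝ) 1,
      F q + ‖u - q‖ ^ 2 / (2 * ν) + (1 - t) * ((1 / ν - ρ) / 2 * ‖q - v‖ ^ 2) ≤
        F v + ‖u - v‖ ^ 2 / (2 * ν) := by
    rintro t ⟨ht0, ht1⟩
    have hconv := hF.2 (Set.mem_univ q) (Set.mem_univ v) (sub_nonneg.2 ht1.le) ht0.le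
      (sub_add_cancel 1 t)
    simp only [smul_eq_mul] at hconv
    have hmin := hq ((1 - t) • q + t • v)
    have hu : u - ((1 - t) • q + t • v) = (1 - t) • (u - q) + t • (u - v) := by module
    have hd : (u - q) - (u - v) = -(q - v) := by abel
    rw [hu, norm_sq_convex_combination, hd, norm_neg] at hmin
    rw [norm_sq_convex_combination] at hconv
    refine le_of_mul_le_mul_left ?_ ht0
    field_simp at hmin hconv ⊢
    nlinarith
  have hlim : Filter.Tendsto
      (fun t : ℝ => F q + ‖u - q‖ ^ 2 / (2 * ν) + (1 - t) * ((1 / ν - ρ) / 2 * ‖q - v‖ ^ 2))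
      (nhdsWithin 0 (Set.Ioi 0))
      (nhds (F q + ‖u - q‖ ^ 2 / (2 * ν) + (1 / ν - ρ) / 2 * ‖q - v‖ ^ 2)) := by
    have hc : Continuous (fun t : ℝ =>
        F q + ‖u - q‖ ^ 2 / (2 * ν) + (1 - t) * ((1 / ν - ρ) / 2 * ‖q - v‖ ^ 2)) := by
      fun_prop
    simpa using (hc.tendsto 0).mono_left nhdsWithin_le_nhds
  exact le_of_tendsto hlim
    (Filter.eventually_of_mem (Ioo_mem_nhdsGT one_pos) key)

/-- The proximal mapping of a weakly convex function is Lipschitz. -/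
lemma prox_lipschitz {F : E → ℝ} {ρ ν : ℝ}
    (hF : ConvexOn ℝ Set.univ (fun x => F x + ρ / 2 * ‖x‖ ^ 2)) (hν : 0 < ν)
    {p : E → E}
    (hp : ∀ u v, F (p u) + ‖u - p u‖ ^ 2 / (2 * ν) ≤ F v + ‖u - v‖ ^ 2 / (2 * ν)) (x y : E) :
    (1 - ν * ρ) * ‖p x - p y‖ ≤ ‖x - y‖ := by
  have h₁ := prox_quadratic_growth hF hν (hp x) (p y)
  have h₂ := prox_quadratic_growth hF hν (hp y) (p x)
  rw [norm_sub_rev (p y) (p x)] at h₂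
  have hid : ‖x - p y‖ ^ 2 - ‖x - p x‖ ^ 2 + (‖y - p x‖ ^ 2 - ‖y - p y‖ ^ 2) =
      2 * ⟪x - y, p x - p y⟫ := by
    simp only [norm_sub_sq_real, inner_sub_left, inner_sub_right]
    ring
  have hcs := real_inner_le_norm (x - y) (p x - p y)
  have hsum : (1 - ν * ρ) * ‖p x - p y‖ ^ 2 ≤ ‖x - y‖ * ‖p x - p y‖ := by
    field_simp at h₁ h₂
    nlinarith
  rcases (norm_nonneg (p x - p y)).eq_or_lt with h0 | h0
  · rw [← h0]
    simp
  · exact le_of_mul_le_mul_right (by nlinarith) h0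

/-- The gradient `(w - p w) / ν` of the Moreau envelope is Lipschitz. -/
lemma moreau_gradient_lipschitz {F : E → ℝ} {ρ ν : ℝ}
    (hF : ConvexOn ℝ Set.univ (fun x => F x + ρ / 2 * ‖x‖ ^ 2)) (hν : 0 < ν)
    (hνρ : ν * ρ < 1) {p : E → E}
    (hp : ∀ u v, F (p u) + ‖u - p u‖ ^ 2 / (2 * ν) ≤ F v + ‖u - v‖ ^ 2 / (2 * ν)) (x y : E) :
    ‖ν⁻¹ • (x - p x) - ν⁻¹ • (y - p y)‖ ≤ (2 - ν * ρ) / (ν - ν ^ 2 * ρ) * ‖x - y‖ := by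
  have hpos : 0 < 1 - ν * ρ := sub_pos.2 hνρ
  have hlip : ‖p x - p y‖ ≤ ‖x - y‖ / (1 - ν * ρ) := by
    rw [le_div_iff₀' hpos]
    exact prox_lipschitz hF hν hp x y
  have hL : (2 - ν * ρ) / (ν - ν ^ 2 * ρ) * ‖x - y‖ =
      ν⁻¹ * (‖x - y‖ + ‖x - y‖ / (1 - ν * ρ)) := by
    rw [show ν - ν ^ 2 * ρ = ν * (1 - ν * ρ) by ring]
    field_simp
    ring
  have hsplit : ν⁻¹ • (x - p x) - ν⁻¹ • (y - p y) = ν⁻¹ • ((x - y) - (p x - p y)) := by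
    module
  rw [hL, hsplit, norm_smul, Real.norm_of_nonneg (inv_nonneg.2 hν.le)]
  gcongr
  exact (norm_sub_le _ _).trans (by gcongr)

/-- Descent inequality for the Moreau envelope. -/
lemma moreau_descent {F : E → ℝ} {ν : ℝ} (hν : 0 < ν) {p : E → E}
    (hp : ∀ u v, F (p u) + ‖u - p u‖ ^ 2 / (2 * ν) ≤ F v + ‖u - v‖ ^ 2 / (2 * ν))
    (x m : E) (α : ℝ) :
    F (p (x - α • m)) + ‖x - α • m - p (x - α • m)‖ ^ 2 / (2 * ν) ≤
      F (p x) + ‖x - p x‖ ^ 2 / (2 * ν) - α * ⟪ν⁻¹ • (x - p x), m⟫ +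
        α ^ 2 / (2 * ν) * ‖m‖ ^ 2 := by
  refine (hp (x - α • m) (p x)).trans (le_of_eq ?_)
  rw [show x - α • m - p x = (x - p x) - α • m by abel, norm_sub_sq_real, norm_smul,
    inner_smul_left, inner_smul_right, mul_pow, Real.norm_eq_abs, sq_abs]
  simp only [conj_trivial]
  field_simp
  ring

/-- One-step contraction of the error of a momentum estimator `m` tracking `a`, when the target
moves to `b` and is observed with error `e`. -/
lemma momentum_error_le {β : ℝ} (hβ0 : 0 < β) (hβ1 : β ≤ 1) (m a b e : E) :
    ‖(1 - β) • m + β • (b + e) - b‖ ^ 2 ≤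
      (1 - β) * ‖m - a‖ ^ 2 + 2 / β * ‖a - b‖ ^ 2 + 2 * β * ‖e‖ ^ 2 := by
  have hsplit : (1 - β) • m + β • (b + e) - b =
      (1 - β) • (m - a) + β • (((1 - β) / β) • (a - b) + e) := by
    rw [smul_add β (((1 - β) / β) • (a - b)), smul_smul, mul_div_cancel₀ _ hβ0.ne']
    module
  have hq := norm_add_sq_le_two_mul (((1 - β) / β) • (a - b)) e
  rw [norm_smul, mul_pow, Real.norm_eq_abs, sq_abs] at hq
  rw [hsplit, norm_sq_convex_combination]
  have hcoef : β * ((1 - β) / β) ^ 2 ≤ 1 / β := by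
    field_simp
    nlinarith
  have hdrop : 0 ≤ β * (1 - β) *
      ‖m - a - (((1 - β) / β) • (a - b) + e)‖ ^ 2 := by
    have := sub_nonneg.2 hβ1
    positivity
  have hq' := mul_le_mul_of_nonneg_left hq hβ0.le
  have hc := mul_le_mul_of_nonneg_right hcoef (sq_nonneg ‖a - b‖)
  rw [show 2 / β = 2 * (1 / β) by ring]
  nlinarith

end Prox

/-- Outer-loop convergence of the inexact momentum method on the Moreau envelope
`Φ = F_ν` of a `ρ`-weakly convex, bounded-below `F`, where `∇Φ(w) = (w − prox_{νF}(w))/ν` and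
`L = (2 − νρ)/(ν − ν²ρ)`. -/
theorem stmt17 (d : ℕ) (F : EuclideanSpace ℝ (Fin d) → ℝ) (ρ ν ε β α : ℝ) (T : ℕ)
    (hF_cont : Continuous F)
    (hρ : 0 < ρ)
    (hF_wc : ConvexOn ℝ Set.univ (fun x => F x + ρ / 2 * ‖x‖ ^ 2))
    (hF_bdd : BddBelow (Set.range F))
    (hν : 0 < ν) (hν' : ν < 1 / ρ)
    -- `p` is the proximal mapping of `F` with parameter `ν`
    (p : EuclideanSpace ℝ (Fin d) → EuclideanSpace ℝ (Fin d))
    (hp : ∀ u v, F (p u) + ‖u - p u‖ ^ 2 / (2 * ν) ≤ F v + ‖u - v‖ ^ 2 / (2 * ν))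
    (hε : 0 < ε) (hβ0 : 0 < β) (hβ : β ≤ 1 / 2)
    (hα0 : 0 < α) (hα : α ≤ β / (2 * ((2 - ν * ρ) / (ν - ν ^ 2 * ρ))))
    (hT : 1 ≤ T)
    (w v z : ℕ → EuclideanSpace ℝ (Fin d))
    (hv0 : v 0 = 0)
    (hz : ∀ t < T, ‖z t - p (w t)‖ ^ 2 ≤ ν ^ 2 * ε ^ 2 / 18)
    (hvrec : ∀ t < T, v (t + 1) = (1 - β) • v t + (β / ν) • (w t - z t))
    (hwrec : ∀ t < T, w (t + 1) = w t - α • v (t + 1)) :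
    (T : ℝ)⁻¹ * ∑ t ∈ Finset.range T, ‖ν⁻¹ • (w t - p (w t))‖ ^ 2 ≤
      2 * ((F (p (w 0)) + ‖w 0 - p (w 0)‖ ^ 2 / (2 * ν)) -
          ⨅ u : EuclideanSpace ℝ (Fin d), F (p u) + ‖u - p u‖ ^ 2 / (2 * ν)) / (α * T) +
        (2 / β - 1) * ‖ν⁻¹ • (w 0 - p (w 0))‖ ^ 2 / T + ε ^ 2 / 3 := by
  have hνρ : ν * ρ < 1 := by rwa [lt_div_iff₀ hρ] at hν'
  have hpos : 0 < 1 - ν * ρ := sub_pos.2 hνρ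
  set L : ℝ := (2 - ν * ρ) / (ν - ν ^ 2 * ρ) with hL
  have hνL : 1 / ν ≤ L := by
    rw [hL, show ν - ν ^ 2 * ρ = ν * (1 - ν * ρ) by ring,
      div_le_div_iff₀ hν (mul_pos hν hpos)]
    nlinarith
  have hL0 : 0 < L := lt_of_lt_of_le (by positivity) hνL
  have hαL : L * α ≤ β / 2 := by
    rw [le_div_iff₀ (by positivity)] at hα
    linarith
  set g : EuclideanSpace ℝ (Fin d) → EuclideanSpace ℝ (Fin d) :=
    fun x => ν⁻¹ • (x - p x) with hg
  set Φ : EuclideanSpace ℝ (Fin d) → ℝ :=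
    fun x => F (p x) + ‖x - p x‖ ^ 2 / (2 * ν) with hΦ
  have hstep : ∀ n < T, v (n + 1) = (1 - β) • v n + β • (g (w n) + ν⁻¹ • (p (w n) - z n)) := by
    intro n hn
    rw [hvrec n hn, hg, div_eq_mul_inv]
    module
  have hnoise : ∀ n < T, ‖ν⁻¹ • (p (w n) - z n)‖ ^ 2 ≤ ε ^ 2 / 18 := by
    intro n hn
    rw [norm_smul, mul_pow, Real.norm_eq_abs, sq_abs, norm_sub_rev]
    refine (mul_le_mul_of_nonneg_left (hz n hn) (sq_nonneg _)).trans (le_of_eq ?_)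
    field_simp
  -- Here `w (0 - 1) = w 0`, so the drift bound also holds at the initial step.
  have hdrift : ∀ n ≤ T, ‖g (w (n - 1)) - g (w n)‖ ^ 2 ≤ β ^ 2 / 4 * ‖v n‖ ^ 2 := by
    intro n hn
    cases n with
    | zero => simp [hv0]
    | succ n =>
      have hlip := moreau_gradient_lipschitz hF_wc hν hνρ hp (w n) (w (n + 1))
      have hw : ‖w n - w (n + 1)‖ = α * ‖v (n + 1)‖ := by
        rw [hwrec n hn, sub_sub_cancel, norm_smul, Real.norm_of_nonneg hα0.le]
      rw [hw, ← hL, ← mul_assoc] at hlip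
      have hle := hlip.trans (mul_le_mul_of_nonneg_right hαL (norm_nonneg _))
      calc ‖g (w n) - g (w (n + 1))‖ ^ 2 ≤ (β / 2 * ‖v (n + 1)‖) ^ 2 := by gcongr
        _ = β ^ 2 / 4 * ‖v (n + 1)‖ ^ 2 := by ring
  have herror : ∀ n < T, ‖v (n + 1) - g (w n)‖ ^ 2 ≤
      (1 - β) * ‖v n - g (w (n - 1))‖ ^ 2 + β / 2 * ‖v n‖ ^ 2 + 2 * β * (ε ^ 2 / 18) := by
    intro n hn
    rw [hstep n hn]
    refine (momentum_error_le hβ0 (by linarith) (v n) (g (w (n - 1))) (g (w n)) _).trans ?_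
    have hd := mul_le_mul_of_nonneg_left (hdrift n hn.le) (by positivity : 0 ≤ 2 / β)
    have he := mul_le_mul_of_nonneg_left (hnoise n hn) (by positivity : 0 ≤ 2 * β)
    have hc : 2 / β * (β ^ 2 / 4 * ‖v n‖ ^ 2) = β / 2 * ‖v n‖ ^ 2 := by
      field_simp
      norm_num
    linarith
  have hdescent : ∀ n < T, ‖g (w n)‖ ^ 2 ≤ 2 / α * (Φ (w n) - Φ (w (n + 1))) +
      ‖v (n + 1) - g (w n)‖ ^ 2 - 3 / 4 * ‖v (n + 1)‖ ^ 2 := by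
    intro n hn
    have h := moreau_descent hν hp (w n) (v (n + 1)) α
    rw [← hwrec n hn] at h
    change Φ (w (n + 1)) ≤ Φ (w n) - α * ⟪g (w n), v (n + 1)⟫ + _ at h
    have hαν : α ^ 2 / (2 * ν) ≤ α / 8 := by
      have : α / ν ≤ 1 / 4 := by
        have := mul_le_mul_of_nonneg_right hνL hα0.le
        rw [div_eq_mul_one_div, mul_comm]
        linarith
      calc α ^ 2 / (2 * ν) = α / 2 * (α / ν) := by
            field_simp
        _ ≤ α / 2 * (1 / 4) := by gcongr
        _ = α / 8 := by ring
    have hq := mul_le_mul_of_nonneg_right hαν (sq_nonneg ‖v (n + 1)‖)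
    have hgap : α * (⟪g (w n), v (n + 1)⟫ - ‖v (n + 1)‖ ^ 2 / 8) ≤ Φ (w n) - Φ (w (n + 1)) := by
      linarith
    have hgap' := mul_le_mul_of_nonneg_left hgap (by positivity : 0 ≤ 2 / α)
    rw [← mul_assoc, div_mul_cancel₀ _ hα0.ne'] at hgap'
    rw [norm_sub_sq_real, real_inner_comm]
    linarith
  have hpotential : ∀ n ≤ T,
      ∑ t ∈ Finset.range n, ‖g (w t)‖ ^ 2 + 2 / α * Φ (w n) +
          (1 / β - 1) * ‖v n - g (w (n - 1))‖ ^ 2 + ‖v n‖ ^ 2 / 2 ≤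
        2 / α * Φ (w 0) + (1 / β - 1) * ‖g (w 0)‖ ^ 2 + n * (ε ^ 2 / 9) := by
    intro n
    induction n with
    | zero => simp [hv0]
    | succ n ih =>
      intro hn
      have h₀ := ih (Nat.le_of_succ_le hn)
      have h₁ := hdescent n hn
      have h₂ := mul_le_mul_of_nonneg_left (herror n hn) (by positivity : 0 ≤ 1 / β)
      have hc : 1 / β * ((1 - β) * ‖v n - g (w (n - 1))‖ ^ 2 + β / 2 * ‖v n‖ ^ 2 +
          2 * β * (ε ^ 2 / 18)) =
          (1 / β - 1) * ‖v n - g (w (n - 1))‖ ^ 2 + ‖v n‖ ^ 2 / 2 + ε ^ 2 / 9 := by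
        field_simp
        ring
      rw [hc] at h₂
      rw [Finset.sum_range_succ, Nat.add_sub_cancel]
      push_cast
      have := sq_nonneg ‖v (n + 1)‖
      linarith
  have hinf : ⨅ u, Φ u ≤ Φ (w T) := by
    obtain ⟨c, hc⟩ := hF_bdd
    refine ciInf_le ⟨c, ?_⟩ (w T)
    rintro _ ⟨u, rfl⟩
    have : 0 ≤ ‖u - p u‖ ^ 2 / (2 * ν) := by positivity
    exact (hc ⟨p u, rfl⟩).trans (le_add_of_nonneg_right this)
  have hT0 : (0 : ℝ) < T := by exact_mod_cast hT
  have hsum : ∑ t ∈ Finset.range T, ‖g (w t)‖ ^ 2 ≤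
      2 / α * (Φ (w 0) - ⨅ u, Φ u) + (2 / β - 1) * ‖g (w 0)‖ ^ 2 + T * (ε ^ 2 / 3) := by
    have h := hpotential T le_rfl
    have hβinv : 1 ≤ 1 / β := by
      rw [le_div_iff₀ hβ0]
      linarith
    have h₁ := mul_nonneg (sub_nonneg.2 hβinv) (sq_nonneg ‖v T - g (w (T - 1))‖)
    have h₂ := mul_le_mul_of_nonneg_left hinf (by positivity : 0 ≤ 2 / α)
    have h₃ : 0 ≤ 1 / β * ‖g (w 0)‖ ^ 2 := by positivity
    have h₄ : 0 ≤ (T : ℝ) * ε ^ 2 := by positivity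
    rw [show 2 / β = 1 / β + 1 / β by ring]
    have := sq_nonneg ‖v T‖
    linarith
  calc (T : ℝ)⁻¹ * ∑ t ∈ Finset.range T, ‖g (w t)‖ ^ 2
      ≤ (T : ℝ)⁻¹ * (2 / α * (Φ (w 0) - ⨅ u, Φ u) + (2 / β - 1) * ‖g (w 0)‖ ^ 2 +
          T * (ε ^ 2 / 3)) := by gcongr
    _ = 2 * (Φ (w 0) - ⨅ u, Φ u) / (α * T) + (2 / β - 1) * ‖g (w 0)‖ ^ 2 / T + ε ^ 2 / 3 := by
        field_simp
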